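/- Let μ be a nonzero finite positive measure on [0,∞), μ({0}) = 0, and α, λ > 0. Define the spectral density ρ(ω) = (1/π) · λ² K_cos(ω) / (α² K_cos(ω)² + (ω − α K_sin(ω))²) for ω ≠ 0, where K_cos(ω) = ∫₀^∞ x/(x²+ω²) dμ(x) and K_sin(ω) = ∫₀^∞ ω/(x²+ω²) dμ(x). Then ρ is integrable on ℝ and ∫_ℝ ρ(ω) dω = λ²/α. -/

import Mathlib

open MeasureTheory Set

namespace SDI
open Filter Topology

noncomputable def G (ν : Measure ℝ) (w : ℂ) : ℂ := ∫ x, (w + (x:ℂ))⁻¹ ∂ν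

lemma norm_le_add {w : ℂ} (hw : 0 ≤ w.re) {x : ℝ} (hx : 0 ≤ x) : ‖w‖ ≤ ‖w + (x:ℂ)‖ := by
  rw [Complex.norm_eq_sqrt_sq_add_sq, Complex.norm_eq_sqrt_sq_add_sq]
  apply Real.sqrt_le_sqrt
  simp
  nlinarith

variable {ν : Measure ℝ} [IsFiniteMeasure ν]

lemma meas (w : ℂ) : AEStronglyMeasurable (fun x : ℝ => (w + (x:ℂ))⁻¹) ν := by
  apply Measurable.aestronglyMeasurable
  fun_prop

lemma bnd {w : ℂ} (hw : 0 ≤ w.re) (h0 : w ≠ 0) {x : ℝ} (hx : 0 ≤ x) :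
    ‖(w + (x:ℂ))⁻¹‖ ≤ ‖w‖⁻¹ := by
  rw [norm_inv]
  exact inv_anti₀ (norm_pos_iff.2 h0) (norm_le_add hw hx)

lemma integ (hν : ∀ᵐ x ∂ν, 0 < x) {w : ℂ} (hw : 0 ≤ w.re) (h0 : w ≠ 0) :
    Integrable (fun x : ℝ => (w + (x:ℂ))⁻¹) ν := by
  refine Integrable.of_bound (meas w) ‖w‖⁻¹ ?_
  filter_upwards [hν] with x hx using bnd hw h0 hx.le

lemma G_norm (hν : ∀ᵐ x ∂ν, 0 < x) {w : ℂ} (hw : 0 ≤ w.re) (h0 : w ≠ 0) :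
    ‖G ν w‖ ≤ ‖w‖⁻¹ * ν.real univ := by
  apply norm_integral_le_of_norm_le_const
  filter_upwards [hν] with x hx using bnd hw h0 hx.le

lemma G_diff (hν : ∀ᵐ x ∂ν, 0 < x) {w : ℂ} (hw : 0 ≤ w.re) (h0 : w ≠ 0) :
    DifferentiableAt ℂ (G ν) w := by
  have hp : 0 < ‖w‖ := norm_pos_iff.2 h0
  have key : ∀ x : ℝ, 0 < x → ∀ z ∈ Metric.ball w (‖w‖/2), ‖w‖/2 ≤ ‖z + (x:ℂ)‖ := by
    intro x hx z hz
    rw [mem_ball_iff_norm] at hz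
    have h1 := norm_le_add hw hx.le
    have h2 := norm_sub_norm_le (w + (x:ℂ)) (w - z)
    have h3 : w + (x:ℂ) - (w - z) = z + x := by ring
    rw [h3, norm_sub_rev w z] at h2
    linarith
  have := hasDerivAt_integral_of_dominated_loc_of_deriv_le (μ := ν) (𝕜 := ℂ)
    (F := fun (z:ℂ) (x:ℝ) => (z + (x:ℂ))⁻¹) (F' := fun z x => -1 / (z + (x:ℂ))^2)
    (x₀ := w) (s := Metric.ball w (‖w‖/2)) (bound := fun _ => 1 / (‖w‖/2)^2)
    (Metric.ball_mem_nhds _ (by positivity))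
    (Eventually.of_forall fun z => meas z) (integ hν hw h0)
    (by apply Measurable.aestronglyMeasurable; fun_prop)
    (by
      filter_upwards [hν] with x hx z hz
      have := key x hx z hz
      rw [norm_div, norm_pow, norm_neg, norm_one]
      gcongr)
    (integrable_const _)
    (by
      filter_upwards [hν] with x hx z hz
      have := key x hx z hz
      have hne : z + (x:ℂ) ≠ 0 := by
        rw [← norm_pos_iff]; linarith
      exact ((hasDerivAt_id z).add_const (x:ℂ)).fun_inv hne)
  exact this.2.differentiableAt

lemma inv_re (w : ℂ) (x : ℝ) : ((w + (x:ℂ))⁻¹).re = (w.re + x) / ‖w + (x:ℂ)‖^2 := by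
  rw [Complex.inv_re, Complex.normSq_eq_norm_sq]; simp

lemma c_pos (hν : ∀ᵐ x ∂ν, 0 < x) (hν0 : ν ≠ 0) {R : ℝ} (hR : 0 < R) :
    Integrable (fun x : ℝ => x / (R + x)^2) ν ∧ 0 < ∫ x, x / (R + x)^2 ∂ν := by
  have hi : Integrable (fun x : ℝ => x / (R + x)^2) ν := by
    refine Integrable.of_bound (by apply Measurable.aestronglyMeasurable; fun_prop) (1/R) ?_
    filter_upwards [hν] with x hx
    rw [Real.norm_of_nonneg (by positivity), div_le_div_iff₀ (by positivity) hR]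
    nlinarith
  refine ⟨hi, ?_⟩
  rw [integral_pos_iff_support_of_nonneg_ae _ hi]
  · rw [pos_iff_ne_zero]
    intro h
    apply hν0
    rw [← ae_eq_bot, ← Filter.eventually_false_iff_eq_bot]
    have h' := measure_eq_zero_iff_ae_notMem.1 h
    filter_upwards [hν, h'] with x hx hx'
    apply hx'
    rw [Function.mem_support]
    positivity
  · filter_upwards [hν] with x hx
    simp only [Pi.zero_apply]
    positivity

lemma G_re (hν : ∀ᵐ x ∂ν, 0 < x) (hν0 : ν ≠ 0) {R : ℝ} (hR : 0 < R) {w : ℂ} (hw : 0 ≤ w.re)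
    (h0 : w ≠ 0) (hwR : ‖w‖ ≤ R) : ∫ x, x / (R + x)^2 ∂ν ≤ (G ν w).re := by
  have : (G ν w).re = ∫ x : ℝ, ((w + (x:ℂ))⁻¹).re ∂ν :=
    (integral_re (integ hν hw h0)).symm
  rw [this]
  apply integral_mono_ae (c_pos hν hν0 hR).1 (integ hν hw h0).re
  filter_upwards [hν] with x hx
  have hpos : 0 < ‖w + (x:ℂ)‖ := lt_of_lt_of_le (norm_pos_iff.2 h0) (norm_le_add hw hx.le)
  have hle : ‖w + (x:ℂ)‖ ≤ R + x := by
    refine (norm_add_le _ _).trans ?_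
    rw [Complex.norm_real, Real.norm_of_nonneg hx.le]; linarith
  show _ ≤ ((w + (x:ℂ))⁻¹).re
  rw [inv_re]
  gcongr
  linarith

noncomputable def F (ν : Measure ℝ) (α : ℝ) (w : ℂ) : ℂ := (α * G ν w + w)⁻¹
noncomputable def H (ν : Measure ℝ) (α : ℝ) (w : ℂ) : ℂ := F ν α w - (w + 1)⁻¹

variable {α : ℝ}

lemma den_ne (hν : ∀ᵐ x ∂ν, 0 < x) (hν0 : ν ≠ 0) (hα : 0 < α) {w : ℂ} (hw : 0 ≤ w.re)
    (h0 : w ≠ 0) : α * G ν w + w ≠ 0 := by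
  intro h
  have h1 := congrArg Complex.re h
  have h2 := G_re hν hν0 (norm_pos_iff.2 h0) hw h0 le_rfl
  have h3 := (c_pos hν hν0 (norm_pos_iff.2 h0)).2
  simp at h1
  have := mul_pos hα (h3.trans_le h2)
  linarith

lemma add_one_ne {w : ℂ} (hw : 0 ≤ w.re) : w + 1 ≠ 0 := by
  intro h
  have h1 := congrArg Complex.re h
  simp at h1
  linarith

lemma H_diff (hν : ∀ᵐ x ∂ν, 0 < x) (hν0 : ν ≠ 0) (hα : 0 < α) {w : ℂ} (hw : 0 ≤ w.re)
    (h0 : w ≠ 0) : DifferentiableAt ℂ (H ν α) w := by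
  have h1 := G_diff hν hw h0
  have h2 := den_ne hν hν0 hα hw h0
  have h3 := add_one_ne hw
  unfold H F
  fun_prop (disch := assumption)

lemma H_bound (hν : ∀ᵐ x ∂ν, 0 < x) (hν0 : ν ≠ 0) (hα : 0 < α) :
    ∃ C, 0 < C ∧ ∀ w : ℂ, 0 ≤ w.re → w ≠ 0 → ‖H ν α w‖ ≤ C / (1 + ‖w‖^2) := by
  set m := ν.real univ with hm
  have hm0 : 0 ≤ m := measureReal_nonneg
  set R := 1 + 2 * α * m with hR
  have hR1 : 1 ≤ R := by rw [hR]; nlinarith [mul_nonneg hα.le hm0]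
  set c := ∫ x, x / (R + x)^2 ∂ν
  have hc : 0 < c := (c_pos hν hν0 (by linarith)).2
  refine ⟨(1/(α*c) + 1) * (1 + R^2) + 4 * (1 + α * m), by positivity, fun w hw h0 => ?_⟩
  have hp : 0 < ‖w‖ := norm_pos_iff.2 h0
  have h1 : (1:ℝ) ≤ ‖w + 1‖ := by
    refine le_trans ?_ (Complex.re_le_norm _)
    simpa using hw
  have h2 : ‖w‖ ≤ ‖w + 1‖ := by simpa using norm_le_add hw (zero_le_one (α := ℝ))
  rw [le_div_iff₀ (by positivity)]
  have hαm : 0 ≤ α * m := by positivity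
  rcases le_total ‖w‖ R with h | h
  · have h3 := G_re hν hν0 (by linarith) hw h0 h
    have h4 : α * c ≤ ‖α * G ν w + w‖ := by
      refine le_trans ?_ (Complex.re_le_norm _)
      have := mul_le_mul_of_nonneg_left h3 hα.le
      simp; linarith
    have h5 : ‖H ν α w‖ ≤ 1/(α*c) + 1 := by
      refine (norm_sub_le _ _).trans ?_
      unfold F
      rw [norm_inv, norm_inv]
      have a1 := inv_anti₀ (by positivity) h4
      have a2 := inv_anti₀ one_pos h1
      rw [inv_one] at a2
      rw [one_div]
      exact add_le_add a1 a2
    calc _ ≤ (1/(α*c) + 1) * (1 + R^2) := by gcongr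
      _ ≤ _ := by linarith
  · have hw1 : 1 ≤ ‖w‖ := hR1.trans h
    have h3 := G_norm hν hw h0
    rw [← hm] at h3
    have h4 : ‖(α:ℂ) * G ν w‖ ≤ α * m * ‖w‖⁻¹ := by
      rw [norm_mul, Complex.norm_real, Real.norm_of_nonneg hα.le]
      nlinarith
    have hi : ‖w‖⁻¹ ≤ 1 := inv_le_one_of_one_le₀ hw1
    have h4' : ‖(α:ℂ) * G ν w‖ ≤ α * m := by nlinarith
    have h5 : ‖w‖/2 ≤ ‖α * G ν w + w‖ := by
      have := norm_sub_norm_le w (-(α * G ν w))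
      rw [norm_neg, sub_neg_eq_add, add_comm w] at this
      nlinarith
    have e : H ν α w = (1 - α * G ν w) / ((α * G ν w + w) * (w + 1)) := by
      unfold H F
      have := den_ne hν hν0 hα hw h0
      have := add_one_ne hw
      field_simp
      ring
    have h6 : ‖(1:ℂ) - α * G ν w‖ ≤ 1 + α * m := by
      refine (norm_sub_le _ _).trans ?_
      rw [norm_one]; linarith
    have h7 : ‖H ν α w‖ ≤ (1 + α * m) / ((‖w‖/2) * ‖w‖) := by
      rw [e, norm_div, norm_mul]
      gcongr
    calc _ ≤ (1 + α * m) / ((‖w‖/2) * ‖w‖) * (‖w‖^2 + ‖w‖^2) := by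
          gcongr; nlinarith
      _ = 4 * (1 + α * m) := by field_simp; ring
      _ ≤ _ := by
        have : 0 ≤ (1/(α*c) + 1) * (1 + R^2) := by positivity
        linarith

/-- point on the line -/
noncomputable def ln (e t : ℝ) : ℂ := e + t * Complex.I

lemma ln_re (e t : ℝ) : (ln e t).re = e := by simp [ln]
lemma ln_im (e t : ℝ) : (ln e t).im = t := by simp [ln]
lemma ln_norm (e t : ℝ) : ‖ln e t‖^2 = e^2 + t^2 := by
  rw [← Complex.normSq_eq_norm_sq, Complex.normSq_apply, ln_re, ln_im]; ring
lemma ln_cont (e : ℝ) : Continuous (ln e) := by unfold ln; fun_prop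
lemma ln_ne {e t : ℝ} (h : e ≠ 0 ∨ t ≠ 0) : ln e t ≠ 0 := by
  intro h'
  have h1 := ln_re e t
  have h2 := ln_im e t
  rw [h'] at h1 h2
  simp at h1 h2
  rcases h with h | h
  · exact h h1.symm
  · exact h h2.symm

lemma H_line_bound {C : ℝ} (hC : 0 < C)
    (hb : ∀ w : ℂ, 0 ≤ w.re → w ≠ 0 → ‖H ν α w‖ ≤ C / (1 + ‖w‖^2)) {e t : ℝ}
    (he : 0 ≤ e) (h : e ≠ 0 ∨ t ≠ 0) :
    ‖H ν α (ln e t)‖ ≤ C * (1 + t^2)⁻¹ ∧ ‖H ν α (ln e t)‖ ≤ C * (1 + e^2)⁻¹ := by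
  have := hb (ln e t) (by rw [ln_re]; exact he) (ln_ne h)
  rw [ln_norm] at this
  constructor <;> refine this.trans ?_ <;> rw [div_eq_mul_inv] <;> gcongr <;> nlinarith

lemma H_line_meas (hν : ∀ᵐ x ∂ν, 0 < x) (hν0 : ν ≠ 0) (hα : 0 < α) {e : ℝ} (he : 0 ≤ e) :
    AEStronglyMeasurable (fun t : ℝ => H ν α (ln e t)) volume := by
  have : ContinuousOn (fun t : ℝ => H ν α (ln e t)) {0}ᶜ := by
    intro t ht
    apply ContinuousAt.continuousWithinAt
    have h1 := (H_diff hν hν0 hα (w := ln e t) (by rw [ln_re]; exact he)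
      (ln_ne (Or.inr ht))).continuousAt
    exact ContinuousAt.comp (f := ln e) h1 (ln_cont e).continuousAt
  have h2 := this.aestronglyMeasurable (μ := volume) (measurableSet_singleton _).compl
  rwa [restrict_compl_singleton] at h2

lemma H_line_int (hν : ∀ᵐ x ∂ν, 0 < x) (hν0 : ν ≠ 0) (hα : 0 < α) {e : ℝ} (he : 0 ≤ e) :
    Integrable (fun t : ℝ => H ν α (ln e t)) := by
  obtain ⟨C, hC, hb⟩ := H_bound hν hν0 hα
  refine (integrable_inv_one_add_sq.const_mul C).mono' (H_line_meas hν hν0 hα he) ?_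
  filter_upwards [compl_mem_ae_iff.2 (measure_singleton (0:ℝ))] with t ht
  exact (H_line_bound hC hb he (Or.inr ht)).1

lemma H_line_zero (hν : ∀ᵐ x ∂ν, 0 < x) (hν0 : ν ≠ 0) (hα : 0 < α) {e : ℝ} (he : 0 < e) :
    ∫ t : ℝ, H ν α (ln e t) = 0 := by
  obtain ⟨C, hC, hb⟩ := H_bound hν hν0 hα
  have h1 := intervalIntegral_tendsto_integral (H_line_int hν hν0 hα he.le)
    tendsto_neg_atTop_atBot tendsto_id
  refine tendsto_nhds_unique h1 ?_
  have hlim : Tendsto (fun T : ℝ => 4 * C * T⁻¹) atTop (𝓝 0) := by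
    simpa using tendsto_inv_atTop_zero.const_mul (4 * C)
  refine squeeze_zero_norm' ?_ hlim
  filter_upwards [eventually_ge_atTop (max e 1)] with T hT
  have hTe : e ≤ T := (le_max_left _ _).trans hT
  have hT1 : 1 ≤ T := (le_max_right _ _).trans hT
  have hrect := Complex.integral_boundary_rect_eq_zero_of_differentiableOn (H ν α)
    (ln e (-T)) (ln T T) (by
      intro w hw
      rw [Complex.mem_reProdIm, ln_re, ln_re, ln_im, ln_im, uIcc_of_le hTe] at hw
      have hre : 0 < w.re := he.trans_le hw.1.1
      refine (H_diff hν hν0 hα hre.le ?_).differentiableWithinAt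
      rintro rfl; simp at hre)
  simp only [ln_re, ln_im] at hrect
  have b1 : ‖∫ x : ℝ in e..T, H ν α (x + ((-T : ℝ) : ℂ) * Complex.I)‖ ≤
      C * (1 + T^2)⁻¹ * |T - e| := by
    apply intervalIntegral.norm_integral_le_of_norm_le_const
    intro x hx
    rw [uIoc_of_le hTe] at hx
    have := (H_line_bound (t := -T) hC hb (he.trans hx.1).le (Or.inl (he.trans hx.1).ne')).1
    rwa [neg_sq] at this
  have b2 : ‖∫ x : ℝ in e..T, H ν α (x + (T : ℂ) * Complex.I)‖ ≤
      C * (1 + T^2)⁻¹ * |T - e| := by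
    apply intervalIntegral.norm_integral_le_of_norm_le_const
    intro x hx
    rw [uIoc_of_le hTe] at hx
    exact (H_line_bound (t := T) hC hb (he.trans hx.1).le (Or.inl (he.trans hx.1).ne')).1
  have b3 : ‖∫ y : ℝ in (-T)..T, H ν α (T + (y : ℂ) * Complex.I)‖ ≤
      C * (1 + T^2)⁻¹ * |T - -T| := by
    apply intervalIntegral.norm_integral_le_of_norm_le_const
    intro x hx
    exact (H_line_bound (e := T) (t := x) hC hb (by linarith) (Or.inl (by linarith))).2
  rw [abs_of_nonneg (by linarith)] at b1 b2 b3
  simp only [smul_eq_mul] at hrect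
  show ‖∫ y : ℝ in (-T)..T, H ν α (e + (y : ℂ) * Complex.I)‖ ≤ _
  set I1 := ∫ x : ℝ in e..T, H ν α (x + ((-T : ℝ) : ℂ) * Complex.I)
  set I2 := ∫ x : ℝ in e..T, H ν α (x + (T : ℂ) * Complex.I)
  set I3 := ∫ y : ℝ in (-T)..T, H ν α (T + (y : ℂ) * Complex.I)
  set I4 := ∫ y : ℝ in (-T)..T, H ν α (e + (y : ℂ) * Complex.I)
  have e4 : Complex.I * I4 = I1 - I2 + Complex.I * I3 := by linear_combination -hrect
  have n4 : ‖I4‖ = ‖I1 - I2 + Complex.I * I3‖ := by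
    rw [← e4, norm_mul, Complex.norm_I, one_mul]
  have n5 : ‖I1 - I2 + Complex.I * I3‖ ≤ ‖I1‖ + ‖I2‖ + ‖I3‖ := by
    refine (norm_add_le _ _).trans ?_
    rw [norm_mul, Complex.norm_I, one_mul]
    gcongr
    exact norm_sub_le _ _
  have hk : 0 < C * (1 + T^2)⁻¹ := by positivity
  calc ‖I4‖ ≤ C * (1 + T^2)⁻¹ * (4 * T) := by rw [n4]; nlinarith
    _ ≤ C * (T^2)⁻¹ * (4 * T) := by gcongr; linarith
    _ = 4 * C * T⁻¹ := by field_simp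

lemma H_zero (hν : ∀ᵐ x ∂ν, 0 < x) (hν0 : ν ≠ 0) (hα : 0 < α) :
    ∫ t : ℝ, H ν α (ln 0 t) = 0 := by
  obtain ⟨C, hC, hb⟩ := H_bound hν hν0 hα
  have h1 : Tendsto (fun e : ℝ => ∫ t : ℝ, H ν α (ln e t)) (𝓝[>] 0)
      (𝓝 (∫ t : ℝ, H ν α (ln 0 t))) := by
    apply tendsto_integral_filter_of_dominated_convergence (fun t => C * (1 + t^2)⁻¹)
    · filter_upwards [self_mem_nhdsWithin] with e he using H_line_meas hν hν0 hα (le_of_lt he)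
    · filter_upwards [self_mem_nhdsWithin] with e he
      exact Eventually.of_forall fun t =>
        (H_line_bound hC hb (le_of_lt he) (Or.inl (ne_of_gt he))).1
    · exact integrable_inv_one_add_sq.const_mul C
    · filter_upwards [compl_mem_ae_iff.2 (measure_singleton (0:ℝ))] with t ht
      have hc := (H_diff hν hν0 hα (w := ln 0 t) (by rw [ln_re])
        (ln_ne (Or.inr ht))).continuousAt
      have hl : Continuous (fun e : ℝ => ln e t) := by unfold ln; fun_prop
      have := ContinuousAt.comp (f := fun e : ℝ => ln e t) (x := 0) hc hl.continuousAt
      exact this.tendsto.mono_left nhdsWithin_le_nhds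
  refine tendsto_nhds_unique h1 (tendsto_const_nhds.congr' ?_)
  filter_upwards [self_mem_nhdsWithin] with e he using (H_line_zero hν hν0 hα he).symm

lemma one_re (t : ℝ) : ((ln 0 t + 1)⁻¹).re = (1 + t^2)⁻¹ := by
  rw [Complex.inv_re, Complex.normSq_apply]
  simp [ln, sq]

lemma F_main (hν : ∀ᵐ x ∂ν, 0 < x) (hν0 : ν ≠ 0) (hα : 0 < α) :
    Integrable (fun t : ℝ => (F ν α (ln 0 t)).re) ∧
      ∫ t : ℝ, (F ν α (ln 0 t)).re = Real.pi := by
  have hi : Integrable (fun t : ℝ => (H ν α (ln 0 t)).re) := (H_line_int hν hν0 hα le_rfl).re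
  have h0 : ∫ t : ℝ, (H ν α (ln 0 t)).re = 0 := by
    have h := integral_re (𝕜 := ℂ) (H_line_int hν hν0 hα le_rfl)
    rw [H_zero hν hν0 hα] at h
    simpa using h
  have e : (fun t : ℝ => (F ν α (ln 0 t)).re) =
      fun t : ℝ => (H ν α (ln 0 t)).re + (1 + t^2)⁻¹ := by
    ext t
    rw [← one_re, H, Complex.sub_re]; ring
  rw [e]
  refine ⟨hi.add integrable_inv_one_add_sq, ?_⟩
  rw [integral_add hi integrable_inv_one_add_sq, h0, integral_univ_inv_one_add_sq, zero_add]

lemma F_re (hν : ∀ᵐ x ∂ν, 0 < x) {t : ℝ} (ht : t ≠ 0) :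
    (F ν α (ln 0 t)).re = α * (∫ x, x / (x^2 + t^2) ∂ν) /
      (α^2 * (∫ x, x / (x^2 + t^2) ∂ν)^2 + (t - α * ∫ x, t / (x^2 + t^2) ∂ν)^2) := by
  have hI := integ hν (w := ln 0 t) (by rw [ln_re]) (ln_ne (Or.inr ht))
  have hr : (G ν (ln 0 t)).re = ∫ x, x / (x^2 + t^2) ∂ν := by
    refine (integral_re hI).symm.trans (integral_congr_ae (Eventually.of_forall fun x => ?_))
    show ((ln 0 t + (x:ℂ))⁻¹).re = _
    rw [Complex.inv_re, Complex.normSq_apply]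
    simp [ln, sq]
  have him : (G ν (ln 0 t)).im = - ∫ x, t / (x^2 + t^2) ∂ν := by
    rw [← integral_neg]
    refine (integral_im hI).symm.trans (integral_congr_ae (Eventually.of_forall fun x => ?_))
    show ((ln 0 t + (x:ℂ))⁻¹).im = _
    rw [Complex.inv_im, Complex.normSq_apply]
    simp [ln, sq, neg_div]
  rw [F, Complex.inv_re, Complex.normSq_apply]
  simp only [Complex.add_re, Complex.add_im, Complex.mul_re, Complex.mul_im, Complex.ofReal_re,
    Complex.ofReal_im, hr, him, ln_re, ln_im]
  congr 1 <;> ring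

end SDI

theorem spectral_density_integral
    (μ : Measure ℝ) [IsFiniteMeasure μ] (hμ : μ (Ici 0) ≠ 0) (hzero : μ {0} = 0)
    (α lam : ℝ) (hα : 0 < α) (hlam : 0 < lam)
    (Kcos Ksin ρ : ℝ → ℝ)
    (hKcos : ∀ ω : ℝ, ω ≠ 0 → Kcos ω = ∫ x in Ici 0, x / (x ^ 2 + ω ^ 2) ∂μ)
    (hKsin : ∀ ω : ℝ, ω ≠ 0 → Ksin ω = ∫ x in Ici 0, ω / (x ^ 2 + ω ^ 2) ∂μ)
    (hρ : ∀ ω : ℝ, ω ≠ 0 →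
      ρ ω = (1 / Real.pi) * (lam ^ 2 * Kcos ω)
        / (α ^ 2 * Kcos ω ^ 2 + (ω - α * Ksin ω) ^ 2)) :
    Integrable ρ ∧ ∫ ω : ℝ, ρ ω = lam ^ 2 / α := by
  have hν : ∀ᵐ x ∂(μ.restrict (Ici 0)), 0 < x := by
    have h1 : ∀ᵐ x ∂(μ.restrict (Ici 0)), x ∈ ({0} : Set ℝ)ᶜ :=
      ae_restrict_of_ae (compl_mem_ae_iff.2 hzero)
    filter_upwards [h1, ae_restrict_mem measurableSet_Ici] with x hx hx'
    exact lt_of_le_of_ne hx' (Ne.symm hx)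
  have hν0 : μ.restrict (Ici 0) ≠ 0 := by
    rwa [Ne, Measure.restrict_eq_zero]
  obtain ⟨hi, hint⟩ := SDI.F_main hν hν0 hα
  have hae : (fun t : ℝ => lam^2 / (α * Real.pi) * (SDI.F (μ.restrict (Ici 0)) α (SDI.ln 0 t)).re)
      =ᵐ[volume] ρ := by
    filter_upwards [compl_mem_ae_iff.2 (measure_singleton (0:ℝ))] with t ht
    rw [SDI.F_re hν ht, hρ t ht, hKcos t ht, hKsin t ht]
    have := Real.pi_pos.ne'
    field_simp
  refine ⟨(hi.const_mul _).congr hae, ?_⟩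
  rw [← integral_congr_ae hae, integral_const_mul, hint]
  have := Real.pi_pos.ne'
  field_simp
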